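/- Consider any run of the multi-level Jefferson's method (with arbitrary tie-breaking) on a multi-level apportionment instance. For every h ≥ 0, after h seats have been allocated, for any two nodes p and c such that c is a child of p, it holds that (V^h_c + 1)/R_c ≥ (V^h_p + 1)/R_p. -/

import Mathlib

/-- A multi-level apportionment instance: a rooted tree on nodes `0, …, n`
(root `0`, encoded by a parent function with `parent i < i` for `i ≠ 0`),
together with entitlements `W`. -/
structure MLA where
  n : ℕ
  parent : Fin (n + 1) → Fin (n + 1)
  parent_lt : ∀ i : Fin (n + 1), i ≠ 0 → (parent i : ℕ) < (i : ℕ)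
  W : Fin (n + 1) → ℝ
  W_pos : ∀ i, 0 < W i
  W_le_one : ∀ i, W i ≤ 1
  W_root : W 0 = 1
  W_sum : ∀ i : Fin (n + 1),
    (Finset.univ.filter (fun c => c ≠ 0 ∧ parent c = i)).Nonempty →
    ∑ c ∈ Finset.univ.filter (fun c => c ≠ 0 ∧ parent c = i), W c = 1

namespace MLA

variable (T : MLA)

/-- The set of children of node `i`. -/
def children (i : Fin (T.n + 1)) : Finset (Fin (T.n + 1)) :=
  Finset.univ.filter (fun c => c ≠ 0 ∧ T.parent c = i)

/-- The ancestor set `A(i)`: `A(0) = {0}` and `A(i) = {parent i} ∪ A(parent i)`. -/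
def ancestors (i : Fin (T.n + 1)) : Finset (Fin (T.n + 1)) :=
  if h : i = 0 then {0} else insert (T.parent i) (ancestors (T.parent i))
termination_by (i : ℕ)
decreasing_by exact T.parent_lt i h

/-- The entitlement of node `i` relative to the root: `R i = ∏_{a ∈ A(i) ∪ {i}} W a`. -/
def R (i : Fin (T.n + 1)) : ℝ := ∏ a ∈ insert i (T.ancestors i), T.W a

/-- `V` is an allocation of `h` seats. -/
def IsAlloc (h : ℕ) (V : Fin (T.n + 1) → ℕ) : Prop :=
  V 0 = h ∧ ∀ i, (T.children i).Nonempty → V i = ∑ c ∈ T.children i, V c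

/-- `V` fulfills lower quota: `V i ≥ LQ i = max_{a ∈ A(i)} ⌊(R i / R a) · V a⌋`. -/
def FulfillsLowerQuota (V : Fin (T.n + 1) → ℕ) : Prop :=
  ∀ i, ∀ a ∈ T.ancestors i, ⌊T.R i / T.R a * (V a : ℝ)⌋ ≤ (V i : ℤ)

/-- `V` fulfills upper quota: `V i ≤ UQ i = min_{a ∈ A(i)} ⌈(R i / R a) · V a⌉`. -/
def FulfillsUpperQuota (V : Fin (T.n + 1) → ℕ) : Prop :=
  ∀ i, ∀ a ∈ T.ancestors i, (V i : ℤ) ≤ ⌈T.R i / T.R a * (V a : ℝ)⌉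


/-- `P` is the set of nodes receiving the new seat in one step of an iterative
method with selection criterion `crit` (to be minimized among children) and
eligibility constraint `elig`: `P` is a root-to-leaf path, each non-root node on
the path is an eligible child of its parent minimizing `crit` among all eligible
children, and the seat counts along `P` each increase by one. -/
def IsStepWith (crit : (Fin (T.n + 1) → ℕ) → Fin (T.n + 1) → ℝ)
    (elig : (Fin (T.n + 1) → ℕ) → Fin (T.n + 1) → Prop)
    (P : Finset (Fin (T.n + 1))) (Vh Vh1 : Fin (T.n + 1) → ℕ) : Prop :=
  (0 : Fin (T.n + 1)) ∈ P ∧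
  (∀ i ∈ P, i ≠ 0 → T.parent i ∈ P) ∧
  (∀ i ∈ P, (T.children i).Nonempty → ∃ c ∈ T.children i, c ∈ P) ∧
  (∀ c ∈ P, ∀ d ∈ P, c ≠ 0 → d ≠ 0 → T.parent c = T.parent d → c = d) ∧
  (∀ c ∈ P, c ≠ 0 → elig Vh c ∧
    ∀ d ∈ T.children (T.parent c), elig Vh d → crit Vh c ≤ crit Vh d) ∧
  (∀ i, Vh1 i = Vh i + if i ∈ P then 1 else 0)

/-- `V : ℕ → (nodes → ℕ)` is a run of the iterative method given by `crit` and
`elig` (with arbitrary tie-breaking): `V 0` is the all-zero allocation and each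
`V (h+1)` is obtained from `V h` by allocating one more seat along a path. -/
def IsRun (crit : (Fin (T.n + 1) → ℕ) → Fin (T.n + 1) → ℝ)
    (elig : (Fin (T.n + 1) → ℕ) → Fin (T.n + 1) → Prop)
    (V : ℕ → Fin (T.n + 1) → ℕ) : Prop :=
  (∀ i, V 0 i = 0) ∧ ∀ h, ∃ P, T.IsStepWith crit elig P (V h) (V (h + 1))

/-- Adams' criterion: a child `c` minimizing `V c / R c` receives the seat. -/
noncomputable def adamsCrit (V : Fin (T.n + 1) → ℕ) (c : Fin (T.n + 1)) : ℝ :=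
  (V c : ℝ) / T.R c

/-- Jefferson's criterion: a child `c` minimizing `(V c + 1) / R c` receives the seat. -/
noncomputable def jeffersonCrit (V : Fin (T.n + 1) → ℕ) (c : Fin (T.n + 1)) : ℝ :=
  ((V c : ℝ) + 1) / T.R c

/-- Trivial eligibility constraint: every child is eligible. -/
def trivElig (_ : Fin (T.n + 1) → ℕ) (_ : Fin (T.n + 1)) : Prop := True

/-- Eligibility constraint of the quota method: `V c / W c < V (parent c) + 1`. -/
def quotaElig (V : Fin (T.n + 1) → ℕ) (c : Fin (T.n + 1)) : Prop :=
  (V c : ℝ) / T.W c < (V (T.parent c) : ℝ) + 1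

/-- Eligibility constraint of the upper-compliant quota method:
`V c / R c < (V a + 1) / R a` for every ancestor `a` of `c`. -/
def ucElig (V : Fin (T.n + 1) → ℕ) (c : Fin (T.n + 1)) : Prop :=
  ∀ a ∈ T.ancestors c, (V c : ℝ) / T.R c < ((V a : ℝ) + 1) / T.R a

end MLA

namespace MLA

theorem ancestors_le (T : MLA) : ∀ (k : ℕ) (i : Fin (T.n + 1)), (i : ℕ) = k →
    ∀ a ∈ T.ancestors i, (a : ℕ) ≤ i ∧ (i ≠ 0 → (a : ℕ) < i) := by
  intro k
  induction k using Nat.strong_induction_on with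
  | _ k ih =>
    intro i hi a ha
    rw [ancestors] at ha
    split_ifs at ha with h0
    · simp only [Finset.mem_singleton] at ha
      subst ha
      subst h0
      simp
    · have hp := T.parent_lt i h0
      rcases Finset.mem_insert.1 ha with rfl | ha
      · exact ⟨hp.le, fun _ => hp⟩
      · have := (ih (T.parent i) (hi ▸ hp) (T.parent i) rfl a ha).1
        exact ⟨by omega, fun _ => by omega⟩

theorem R_pos (T : MLA) (i : Fin (T.n + 1)) : 0 < T.R i :=
  Finset.prod_pos fun a _ => T.W_pos a

theorem R_child (T : MLA) {p c : Fin (T.n + 1)} (hc : c ∈ T.children p) :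
    T.R c = T.W c * T.R p := by
  simp only [children, Finset.mem_filter, Finset.mem_univ, true_and] at hc
  obtain ⟨h0, rfl⟩ := hc
  have hn : c ∉ T.ancestors c := fun hm =>
    lt_irrefl _ ((T.ancestors_le _ c rfl c hm).2 h0)
  have ha : T.ancestors c = insert (T.parent c) (T.ancestors (T.parent c)) := by
    rw [ancestors, dif_neg h0]
  rw [R, Finset.prod_insert hn, ha, R]

theorem sum_R (T : MLA) {p : Fin (T.n + 1)} (hp : (T.children p).Nonempty) :
    ∑ d ∈ T.children p, T.R d = T.R p := by
  rw [Finset.sum_congr rfl (fun d hd => T.R_child hd), ← Finset.sum_mul]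
  have := T.W_sum p hp
  rw [children, this, one_mul]

theorem run_inv (T : MLA) (V : ℕ → Fin (T.n + 1) → ℕ)
    (hrun : T.IsRun T.jeffersonCrit T.trivElig V) (h : ℕ) (p : Fin (T.n + 1))
    (hp : (T.children p).Nonempty) :
    V h p = ∑ d ∈ T.children p, V h d ∧
    ∀ c ∈ T.children p, ∀ d ∈ T.children p,
      (V h d : ℝ) / T.R d ≤ ((V h c : ℝ) + 1) / T.R c := by
  induction h with
  | zero =>
    have h0 := hrun.1
    refine ⟨by simp [h0], fun c _ d _ => ?_⟩
    have := T.R_pos c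
    simp only [h0, Nat.cast_zero, zero_div]
    positivity
  | succ h ih =>
    obtain ⟨ih1, ih2⟩ := ih
    obtain ⟨P, -, hpar, hex, huniq, hmin, hV⟩ := hrun.2 h
    have mc : ∀ d, d ∈ T.children p ↔ d ≠ 0 ∧ T.parent d = p := by
      intro d; simp [children]
    constructor
    · simp only [hV]
      rw [Finset.sum_add_distrib, ← ih1]
      congr 1
      by_cases hpP : p ∈ P
      · obtain ⟨c, hc, hcP⟩ := hex p hpP hp
        rw [Finset.sum_eq_single_of_mem c hc]
        · simp [hpP, hcP]
        · intro d hd hdc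
          rw [if_neg]
          intro hdP
          exact hdc (huniq d hdP c hcP ((mc d).1 hd).1 ((mc c).1 hc).1
            (((mc d).1 hd).2.trans ((mc c).1 hc).2.symm))
      · rw [if_neg hpP, Finset.sum_eq_zero]
        intro d hd
        rw [if_neg]
        intro hdP
        exact hpP (((mc d).1 hd).2 ▸ hpar d hdP ((mc d).1 hd).1)
    · intro c hc d hd
      have hRc := T.R_pos c
      have hmono : ((V h c : ℝ) + 1) / T.R c ≤ ((V (h + 1) c : ℝ) + 1) / T.R c := by
        have : (V h c : ℝ) ≤ V (h + 1) c := by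
          rw [hV c]; exact_mod_cast Nat.le_add_right _ _
        gcongr
      refine le_trans ?_ hmono
      by_cases hdP : d ∈ P
      · have := (hmin d hdP ((mc d).1 hd).1).2 c (by rw [((mc d).1 hd).2]; exact hc) trivial
        simp only [jeffersonCrit] at this
        rw [hV d, if_pos hdP]
        push_cast
        exact this
      · rw [hV d, if_neg hdP]
        exact ih2 c hc d hd

end MLA

/-- In any run of the multi-level Jefferson's method, after `h`
seats have been allocated, for any child `c` of a node `p` we have
`(V^h_c + 1)/R_c ≥ (V^h_p + 1)/R_p`. -/
theorem jefferson_child_parent_ratio (T : MLA) (V : ℕ → Fin (T.n + 1) → ℕ)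
    (hrun : T.IsRun T.jeffersonCrit T.trivElig V) (h : ℕ)
    (p c : Fin (T.n + 1)) (hc : c ∈ T.children p) :
    ((V h p : ℝ) + 1) / T.R p ≤ ((V h c : ℝ) + 1) / T.R c := by
  have hp : (T.children p).Nonempty := ⟨c, hc⟩
  obtain ⟨h1, h2⟩ := T.run_inv V hrun h p hp
  have hRc := T.R_pos c
  rw [div_le_iff₀ (T.R_pos p), ← T.sum_R hp, Finset.mul_sum, h1,
    ← Finset.add_sum_erase _ _ hc, ← Finset.add_sum_erase _ _ hc]
  push_cast
  have e : ((V h c : ℝ) + 1) / T.R c * T.R c = V h c + 1 := by field_simp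
  have : ∑ d ∈ (T.children p).erase c, (V h d : ℝ) ≤
      ∑ d ∈ (T.children p).erase c, ((V h c : ℝ) + 1) / T.R c * T.R d := by
    refine Finset.sum_le_sum fun d hd => ?_
    rw [← div_le_iff₀ (T.R_pos d)]
    exact h2 c hc d (Finset.mem_of_mem_erase hd)
  linarith
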